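/- Let X₁, X₂, X₃ be nonempty Polish spaces, each containing at least two points, with their Borel σ-algebras, let D₁ ≥ D₂ ≥ D₃ > 0 and a ≥ 0. Define U(A_McD) as the supremum, over all pairs (f, μ) where f : X₁ × X₂ × X₃ → ℝ is measurable with Osc_i(f) ≤ D_i for i = 1, 2, 3, μ = μ₁ ⊗ μ₂ ⊗ μ₃ is a product of Borel probability measures, and E_μ[f] ≤ 0, of μ({x : f(x) ≥ a}). Then U(A_McD) = max(F₁, F₂). -/

import Mathlib

open MeasureTheory
open scoped ENNReal

/-!
The supremum is reduced to a problem on the cube `{0,1}³`.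

For fixed `μ₂, μ₃`, both the mean of `f` and the probability of `{f ≥ a}` are integrals against `μ₁`,
so `μ₁` can be replaced by a two-point measure without decreasing the probability and keeping the
mean nonpositive (`two_point`). Doing this in each factor (`reduction`) leaves a function `F` on the
cube and three probabilities.

On the cube let `A = {F ≥ a}` and `P` its probability. By the oscillation bounds `F ≥ a - d(·, A)` with
the weighted Hamming distance `d`, so the mean of `d(·, A)` is at least `a`. If `F ≥ a - D₁` throughout,
then `P ≤ 1 - a / D₁`, which is at most `F₁`. Otherwise some vertex, after a reflection `000`, is not in
`A` together with its three neighbours, and `A ⊆ {111, 110, 101, 011}` (`cube_bound_of_far`). Up to a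
change of the probabilities, only two sets matter. For `{111}` the best probability is `F₁`, by AM-GM
with the constraint that probabilities are at most `1` (`single_bound`). For the full majority set the
first two probabilities may be taken equal (`maj_bound`), and the remaining one-parameter problem has
its interior critical points at the roots of the cubic in `F₂` (`diag_bound`).

Conversely, these configurations are realized on the given spaces by two-point measures and by
functions of the indicators of one atom in each factor (`attained_le`).
-/

/-- The quantity `F₁` of the optimal three-dimensional McDiarmid bound. -/
noncomputable def Fone (D₁ D₂ D₃ a : ℝ) : ℝ :=
  if D₁ + D₂ + D₃ ≤ a then 0
  else if D₁ + D₂ - 2 * D₃ ≤ a then (D₁ + D₂ + D₃ - a) ^ 3 / (27 * D₁ * D₂ * D₃)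
  else if D₁ - D₂ ≤ a then (D₁ + D₂ - a) ^ 2 / (4 * D₁ * D₂)
  else 1 - a / D₁

/-- The quantity `F₂` of the optimal three-dimensional McDiarmid bound: the maximum
of `ψ(γ)` over real roots `γ ∈ (0,1)` of the cubic `(1+γ)³ − A(1+γ)² + B = 0`
with `θ(γ) ∈ (0,1)`, and `0` if there is no such root (`Real.sSup ∅ = 0`). -/
noncomputable def Ftwo (D₁ D₂ D₃ a : ℝ) : ℝ :=
  sSup ((fun γ : ℝ =>
      γ ^ 2 * (2 * D₂ / D₃ - 1) - 2 * γ * (3 * D₂ / D₃ - 1) +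
        γ / (1 + γ) * (8 * D₂ / D₃ - 2 * a / D₃)) ''
    {γ : ℝ | γ ∈ Set.Ioo (0 : ℝ) 1 ∧
      (1 + γ) ^ 3 - (5 * D₂ - 2 * D₃) / (2 * D₂ - D₃) * (1 + γ) ^ 2 +
        (4 * D₂ - a) / (2 * D₂ - D₃) = 0 ∧
      (1 - a / (D₃ * (1 - γ ^ 2)) + D₂ / D₃ * ((1 - γ) / (1 + γ))) ∈
        Set.Ioo (0 : ℝ) 1})

/-! ### Optimization over the probabilities -/

lemma Fone_nonneg {D₁ D₂ D₃ a : ℝ} (h12 : D₂ ≤ D₁) (h23 : D₃ ≤ D₂) (hD₃ : 0 < D₃) :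
    0 ≤ Fone D₁ D₂ D₃ a := by
  have h2 : 0 < D₂ := by linarith
  have h1 : 0 < D₁ := by linarith
  unfold Fone
  split_ifs with c1 c2 c3
  · exact le_rfl
  · have : 0 ≤ D₁ + D₂ + D₃ - a := by linarith
    positivity
  · positivity
  · rw [sub_nonneg, div_le_one h1]
    linarith

/-- If `X_i = 1` with probabilities `p, q, r`, the level set of `a - d(·, {111})` has probability
`p q r` and the mean condition reads `a ≤ D₁ (1 - p) + D₂ (1 - q) + D₃ (1 - r)`. `F₁` is the maximum of
`p q r` under this constraint; its branches tell which of `p, q, r` saturate at `1`. -/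
lemma single_bound {D₁ D₂ D₃ a : ℝ} (h12 : D₂ ≤ D₁) (h23 : D₃ ≤ D₂) (hD₃ : 0 < D₃)
    {p q r : ℝ} (hp : 0 ≤ p) (_hp1 : p ≤ 1) (hq : 0 ≤ q) (hq1 : q ≤ 1) (hr : 0 ≤ r) (hr1 : r ≤ 1)
    (h : a ≤ D₁ * (1 - p) + D₂ * (1 - q) + D₃ * (1 - r)) :
    p * q * r ≤ Fone D₁ D₂ D₃ a := by
  have h2 : 0 < D₂ := by linarith
  have h1 : 0 < D₁ := by linarith
  have hy1 : 0 ≤ D₁ * p := by positivity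
  have hy2 : 0 ≤ D₂ * q := by positivity
  have hy3 : 0 ≤ D₃ * r := by positivity
  have hz2 : D₂ * q ≤ D₂ := by nlinarith
  have hz3 : D₃ * r ≤ D₃ := by nlinarith
  unfold Fone
  split_ifs with c1 c2 c3
  · have : D₁ * p = 0 := by linarith
    have : p = 0 := by
      rcases mul_eq_zero.1 this with h | h
      · linarith
      · exact h
    simp [this]
  · rw [le_div_iff₀ (by positivity)]
    -- AM-GM for the three numbers `D₁ p, D₂ q, D₃ r`
    have key : ∀ x y z : ℝ, 0 ≤ x → 0 ≤ y → 0 ≤ z → 27 * (x * y * z) ≤ (x + y + z) ^ 3 := by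
      intro x y z hx hy hz
      nlinarith [mul_nonneg hx (sq_nonneg (y - z)), mul_nonneg hy (sq_nonneg (x - z)),
        mul_nonneg hz (sq_nonneg (x - y)), mul_nonneg (add_nonneg (add_nonneg hx hy) hz)
          (add_nonneg (add_nonneg (sq_nonneg (x - y)) (sq_nonneg (y - z))) (sq_nonneg (x - z)))]
    have k := key _ _ _ hy1 hy2 hy3
    have : (D₁ * p + D₂ * q + D₃ * r) ^ 3 ≤ (D₁ + D₂ + D₃ - a) ^ 3 := by
      apply pow_le_pow_left₀ (by linarith)
      linarith
    linarith
  · push Not at c1 c2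
    rw [le_div_iff₀ (by positivity)]
    set S := D₁ + D₂ + D₃ - a with hS
    have k1 : 4 * ((D₁ * p) * (D₂ * q)) ≤ (S - D₃ * r) ^ 2 := by
      have : (D₁ * p + D₂ * q) ^ 2 ≤ (S - D₃ * r) ^ 2 := by
        apply pow_le_pow_left₀ (by linarith)
        linarith
      nlinarith [sq_nonneg (D₁ * p - D₂ * q)]
    -- `y ↦ y (S - y)²` is increasing on `[0, S / 3]`, and `D₃ ≤ S / 3` here
    have k2 : (D₃ * r) * (S - D₃ * r) ^ 2 ≤ D₃ * (S - D₃) ^ 2 := by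
      have e : D₃ * (S - D₃) ^ 2 - (D₃ * r) * (S - D₃ * r) ^ 2
          = (D₃ - D₃ * r) * ((S - D₃ - D₃ * r) ^ 2 - D₃ * (D₃ * r)) := by ring
      have : D₃ * (D₃ * r) ≤ (S - D₃ - D₃ * r) ^ 2 := by
        nlinarith
      nlinarith
    have k3 : D₃ * (p * q * r * (4 * D₁ * D₂)) ≤ D₃ * (D₁ + D₂ - a) ^ 2 := by
      have : (D₃ * r) * (4 * ((D₁ * p) * (D₂ * q))) ≤ (D₃ * r) * (S - D₃ * r) ^ 2 :=
        mul_le_mul_of_nonneg_left k1 hy3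
      have e : S - D₃ = D₁ + D₂ - a := by rw [hS]; ring
      rw [e] at k2
      linarith
    exact le_of_mul_le_mul_left k3 hD₃
  · push Not at c1 c2 c3
    have e : 1 - a / D₁ = (D₁ - a) / D₁ := by field_simp
    rw [e, le_div_iff₀ h1]
    set T := D₁ + D₂ + D₃ - a with hT
    have k1 : (D₁ * p) * ((D₂ * q) * (D₃ * r)) ≤ (T - D₂ * q - D₃ * r) * ((D₂ * q) * (D₃ * r)) :=
      mul_le_mul_of_nonneg_right (by linarith) (mul_nonneg hy2 hy3)
    -- `y ↦ y (C - y)` is increasing on `[0, C / 2]`; this is used for `D₂ q`, then for `D₃ r`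
    have k2 : (T - D₂ * q - D₃ * r) * (D₂ * q) ≤ (T - D₂ - D₃ * r) * D₂ := by
      nlinarith [mul_nonneg (sub_nonneg.2 hz2)
        (by linarith : 0 ≤ T - D₂ - D₂ * q - D₃ * r)]
    have k3 : (T - D₂ - D₃ * r) * (D₃ * r) ≤ (D₁ - a) * D₃ := by
      nlinarith [mul_nonneg (sub_nonneg.2 hz3) (by linarith : 0 ≤ T - D₂ - D₃ - D₃ * r)]
    have k4 : D₂ * D₃ * (p * q * r * D₁) ≤ D₂ * D₃ * (D₁ - a) := by
      nlinarith [mul_le_mul_of_nonneg_right k2 hy3, mul_le_mul_of_nonneg_right k3 h2.le]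
    exact le_of_mul_le_mul_left k4 (by positivity)

/-- The expression `θ(γ)` of `Ftwo`: the third probability that makes the mean condition of the
majority configuration an equality when the first two equal `γ` (see `theta_spec`). -/
noncomputable def theta (D₂ D₃ a γ : ℝ) : ℝ :=
  1 - a / (D₃ * (1 - γ ^ 2)) + D₂ / D₃ * ((1 - γ) / (1 + γ))

/-- The expression `ψ(γ)` of `Ftwo`: the probability of the majority level set for the
probabilities `(γ, γ, θ(γ))` (see `psi_eq`). -/
noncomputable def psi (D₂ D₃ a γ : ℝ) : ℝ :=
  γ ^ 2 * (2 * D₂ / D₃ - 1) - 2 * γ * (3 * D₂ / D₃ - 1) +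
        γ / (1 + γ) * (8 * D₂ / D₃ - 2 * a / D₃)

lemma theta_spec {D₂ D₃ a γ : ℝ} (hD₃ : 0 < D₃) (h0 : 0 < γ) (h1 : γ < 1) :
    D₃ * (1 - theta D₂ D₃ a γ) * (1 - γ ^ 2) + D₂ * (1 - γ) ^ 2 = a := by
  have e1 : (1 - γ) ≠ 0 := by linarith
  have e2 : (1 + γ) ≠ 0 := by linarith
  have e3 : 1 - γ ^ 2 = (1 - γ) * (1 + γ) := by ring
  unfold theta
  rw [e3]
  field_simp
  ring

lemma psi_eq {D₂ D₃ a γ : ℝ} (hD₃ : 0 < D₃) (h0 : 0 < γ) (h1 : γ < 1) :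
    psi D₂ D₃ a γ = γ ^ 2 + 2 * γ * (1 - γ) * theta D₂ D₃ a γ := by
  have e1 : (1 - γ) ≠ 0 := by linarith
  have e2 : (1 + γ) ≠ 0 := by linarith
  have e3 : 1 - γ ^ 2 = (1 - γ) * (1 + γ) := by ring
  unfold theta psi
  rw [e3]
  field_simp
  ring

lemma psi_le_Ftwo {D₂ D₃ a γ : ℝ} (D₁ : ℝ) (hD₃ : 0 < D₃) (h0 : 0 < γ) (h1 : γ < 1)
    (hc : (1 + γ) ^ 3 - (5 * D₂ - 2 * D₃) / (2 * D₂ - D₃) * (1 + γ) ^ 2 +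
        (4 * D₂ - a) / (2 * D₂ - D₃) = 0)
    (ht0 : 0 < theta D₂ D₃ a γ) (ht1 : theta D₂ D₃ a γ < 1) :
    psi D₂ D₃ a γ ≤ Ftwo D₁ D₂ D₃ a := by
  unfold Ftwo
  apply le_csSup
  · refine ⟨1, ?_⟩
    rintro _ ⟨x, ⟨⟨hx0, hx1⟩, -, -, hx3⟩, rfl⟩
    change psi D₂ D₃ a x ≤ 1
    rw [psi_eq hD₃ hx0 hx1]
    change theta D₂ D₃ a x < 1 at hx3
    nlinarith [mul_pos hx0 (sub_pos.2 hx1)]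
  · exact ⟨γ, ⟨⟨h0, h1⟩, hc, ht0, ht1⟩, rfl⟩

lemma hasDerivAt_psi {D₂ D₃ a γ : ℝ} (h0 : 0 < γ) :
    HasDerivAt (psi D₂ D₃ a) (2 * γ * (2 * D₂ / D₃ - 1) - 2 * (3 * D₂ / D₃ - 1) +
      1 / (1 + γ) ^ 2 * (8 * D₂ / D₃ - 2 * a / D₃)) γ := by
  have e2 : (1 + γ) ≠ 0 := by linarith
  have A := ((hasDerivAt_id γ).pow 2).mul_const (2 * D₂ / D₃ - 1)
  have B := ((hasDerivAt_id γ).const_mul 2).mul_const (3 * D₂ / D₃ - 1)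
  have C := ((hasDerivAt_id γ).div ((hasDerivAt_id γ).const_add 1) e2).mul_const
    (8 * D₂ / D₃ - 2 * a / D₃)
  refine ((A.sub B).add C).congr_deriv ?_
  simp

/-- The majority configuration with probabilities `(γ, γ, θ)`. At a maximizer over the compact
feasible set, a boundary value of `γ` or `θ` is dominated by a configuration of `single_bound`; in the
interior the mean condition is an equality, so `θ = θ(γ)` and `γ` is a critical point of `ψ`, which is
the cubic equation in `Ftwo`. -/
lemma diag_bound {D₁ D₂ D₃ a : ℝ} (h12 : D₂ ≤ D₁) (h23 : D₃ ≤ D₂) (hD₃ : 0 < D₃)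
    {γ θ : ℝ} (hγ0 : 0 ≤ γ) (hγ1 : γ ≤ 1) (hθ0 : 0 ≤ θ) (hθ1 : θ ≤ 1)
    (h : a ≤ D₃ * (1 - θ) * (1 - γ ^ 2) + D₂ * (1 - γ) ^ 2) :
    γ ^ 2 + 2 * γ * (1 - γ) * θ ≤ max (Fone D₁ D₂ D₃ a) (Ftwo D₁ D₂ D₃ a) := by
  have h2 : 0 < D₂ := by linarith
  let e : ℝ × ℝ → ℝ := fun z => D₃ * (1 - z.2) * (1 - z.1 ^ 2) + D₂ * (1 - z.1) ^ 2
  let P : ℝ × ℝ → ℝ := fun z => z.1 ^ 2 + 2 * z.1 * (1 - z.1) * z.2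
  let K : Set (ℝ × ℝ) := (Set.Icc 0 1 ×ˢ Set.Icc 0 1) ∩ {z | a ≤ e z}
  have hK : IsCompact K := (isCompact_Icc.prod isCompact_Icc).inter_right
    (isClosed_le continuous_const (by fun_prop))
  have hmem : (γ, θ) ∈ K := ⟨⟨⟨hγ0, hγ1⟩, hθ0, hθ1⟩, h⟩
  obtain ⟨⟨g, t⟩, ⟨⟨⟨hg0, hg1⟩, ht0, ht1⟩, hgt⟩, hmax⟩ :=
    hK.exists_isMaxOn ⟨_, hmem⟩ (f := P) (by fun_prop)
  have hle : γ ^ 2 + 2 * γ * (1 - γ) * θ ≤ P (g, t) := hmax hmem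
  refine hle.trans ?_
  change a ≤ D₃ * (1 - t) * (1 - g ^ 2) + D₂ * (1 - g) ^ 2 at hgt
  change g ^ 2 + 2 * g * (1 - g) * t ≤ _
  dsimp only at hg0 hg1 ht0 ht1
  rcases hg0.eq_or_lt with rfl | hg0
  · apply le_max_of_le_left
    simpa using Fone_nonneg h12 h23 hD₃
  rcases hg1.eq_or_lt with rfl | hg1
  · apply le_max_of_le_left
    have := single_bound (a := a) h12 h23 hD₃ zero_le_one le_rfl zero_le_one le_rfl
      zero_le_one le_rfl (by linarith)
    linarith
  rcases ht0.eq_or_lt with rfl | ht0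
  · apply le_max_of_le_left
    have := single_bound (a := a) h12 h23 hD₃ hg0.le hg1.le hg0.le hg1.le
      zero_le_one le_rfl (by nlinarith [mul_nonneg (sub_nonneg.2 hg1.le) hg0.le])
    linarith
  rcases ht1.eq_or_lt with rfl | ht1
  · apply le_max_of_le_left
    have := single_bound (a := a) h12 h23 hD₃ (p := g ^ 2 + 2 * g * (1 - g) * 1) (q := 1) (r := 1)
      (by nlinarith [mul_pos hg0 (sub_pos.2 hg1)]) (by nlinarith [mul_pos hg0 (sub_pos.2 hg1)])
      zero_le_one le_rfl
      zero_le_one le_rfl (by nlinarith [mul_nonneg (sub_nonneg.2 h12) (sq_nonneg (1 - g))])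
    linarith
  apply le_max_of_le_right
  have hspec := theta_spec (D₂ := D₂) (a := a) hD₃ hg0 hg1
  have hg2 : 0 < 1 - g ^ 2 := by nlinarith
  have hpos : 0 < g * (1 - g) := mul_pos hg0 (sub_pos.2 hg1)
  have htle : t ≤ theta D₂ D₃ a g := by
    have : 0 ≤ D₃ * (1 - g ^ 2) * (theta D₂ D₃ a g - t) := by nlinarith
    have := nonneg_of_mul_nonneg_right this (by positivity)
    linarith
  have hteq : theta D₂ D₃ a g = t := by
    -- otherwise `t` could be increased, and with it the objective
    by_contra hne
    have hlt : t < theta D₂ D₃ a g := lt_of_le_of_ne htle (Ne.symm hne)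
    have hm : (g, min (theta D₂ D₃ a g) 1) ∈ K := by
      refine ⟨⟨⟨hg0.le, hg1.le⟩, le_min (by linarith) zero_le_one, min_le_right _ _⟩, ?_⟩
      change a ≤ D₃ * (1 - min (theta D₂ D₃ a g) 1) * (1 - g ^ 2) + D₂ * (1 - g) ^ 2
      have := min_le_left (theta D₂ D₃ a g) 1
      nlinarith [mul_nonneg (mul_pos hD₃ hg2).le (sub_nonneg.2 this)]
    have h3 : g ^ 2 + 2 * g * (1 - g) * min (theta D₂ D₃ a g) 1 ≤ g ^ 2 + 2 * g * (1 - g) * t :=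
      hmax hm
    have h4 : t < min (theta D₂ D₃ a g) 1 := lt_min hlt ht1
    nlinarith
  have hval : g ^ 2 + 2 * g * (1 - g) * t = psi D₂ D₃ a g := by rw [psi_eq hD₃ hg0 hg1, hteq]
  rw [hval]
  have hcont : ContinuousAt (theta D₂ D₃ a) g := by
    unfold theta
    have : D₃ * (1 - g ^ 2) ≠ 0 := by positivity
    have : 1 + g ≠ 0 := by positivity
    fun_prop (disch := assumption)
  have hloc : IsLocalMax (psi D₂ D₃ a) g := by
    filter_upwards [Ioo_mem_nhds hg0 hg1,
      hcont.eventually (Ioo_mem_nhds (hteq ▸ ht0) (hteq ▸ ht1))] with x hx hx'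
    rw [← hval, psi_eq hD₃ hx.1 hx.2]
    have hm : (x, theta D₂ D₃ a x) ∈ K :=
      ⟨⟨⟨hx.1.le, hx.2.le⟩, hx'.1.le, hx'.2.le⟩, (theta_spec hD₃ hx.1 hx.2).ge⟩
    exact hmax hm
  have hder := hloc.hasDerivAt_eq_zero (hasDerivAt_psi hg0)
  refine psi_le_Ftwo D₁ hD₃ hg0 hg1 ?_ (by linarith) (by linarith)
  have e1 : 2 * D₂ - D₃ ≠ 0 := by linarith
  have e2 : 1 + g ≠ 0 := by positivity
  field_simp at hder ⊢
  linear_combination (1/2) * hder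

/-- The majority level set `{110, 101, 011, 111}` with probabilities `(p, q, θ)`. Both
`s = p q` and `z = (1 - p) (1 - q)` should be as large as possible on the line where the objective
`(1 - θ) s + θ (1 - z)` is constant, and the limit is `√s + √z = 1`, that is, equal first and second
probabilities; so `diag_bound` applies. -/
lemma maj_bound {D₁ D₂ D₃ a : ℝ} (h12 : D₂ ≤ D₁) (h23 : D₃ ≤ D₂) (hD₃ : 0 < D₃)
    {p q θ : ℝ} (hp : 0 ≤ p) (hp1 : p ≤ 1) (hq : 0 ≤ q) (hq1 : q ≤ 1) (hθ : 0 ≤ θ) (hθ1 : θ ≤ 1)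
    (h : a ≤ D₃ * (1 - θ) * (1 - p * q) + D₂ * ((1 - p) * (1 - q))) :
    p * q + θ * (p * (1 - q) + (1 - p) * q) ≤
      max (Fone D₁ D₂ D₃ a) (Ftwo D₁ D₂ D₃ a) := by
  have h2 : 0 < D₂ := by linarith
  have hp' := sub_nonneg.2 hp1
  have hq' := sub_nonneg.2 hq1
  have hpq := mul_nonneg hp hq
  have hpq' := mul_nonneg hp' hq'
  have hpq1 := mul_nonneg hp hq'
  have hpq2 := mul_nonneg hp' hq
  rcases hθ.eq_or_lt with rfl | hθ0
  · apply le_max_of_le_left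
    have := single_bound (a := a) h12 h23 hD₃ hp hp1 hq hq1
      zero_le_one le_rfl (by nlinarith)
    linarith
  set Q := p * q + θ * (p * (1 - q) + (1 - p) * q) with hQ
  have hQ1 : Q ≤ 1 := by nlinarith
  have hQ0 : 0 ≤ Q := by positivity
  -- equal probabilities `γ, γ` with the same value of the objective
  obtain ⟨γ, ⟨hγ0, hγ1⟩, hγ⟩ : Q ∈ (fun x : ℝ => x ^ 2 + 2 * x * (1 - x) * θ) '' Set.Icc 0 1 := by
    apply intermediate_value_Icc zero_le_one (by fun_prop)
    simp [hQ0, hQ1]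
  dsimp only at hγ
  have rel : (1 - θ) * (p * q - γ ^ 2) = θ * ((1 - p) * (1 - q) - (1 - γ) ^ 2) := by
    rw [hQ] at hγ
    linear_combination -hγ
  have hs : p * q ≤ γ ^ 2 := by
    by_contra hc
    push Not at hc
    have hz : (1 - γ) ^ 2 ≤ (1 - p) * (1 - q) := by
      have : 0 ≤ θ * ((1 - p) * (1 - q) - (1 - γ) ^ 2) := by
        rw [← rel]; exact mul_nonneg (by linarith) (by linarith)
      have := nonneg_of_mul_nonneg_right this hθ0
      linarith
    -- `√(pq) > γ` and `√((1-p)(1-q)) ≥ 1 - γ` contradict the AM-GM bound `≤ 1` on their sum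
    have a1 : γ < (p + q) / 2 := by
      apply lt_of_pow_lt_pow_left₀ 2 (by linarith)
      nlinarith [sq_nonneg (p - q)]
    have a2 : 1 - γ ≤ ((1 - p) + (1 - q)) / 2 := by
      apply le_of_sq_le_sq _ (by linarith)
      nlinarith [sq_nonneg (p - q)]
    linarith
  have hz : D₃ * ((1 - θ) * (γ ^ 2 - p * q)) ≤ D₂ * ((1 - γ) ^ 2 - (1 - p) * (1 - q)) := by
    have e1 : (1 - θ) * (γ ^ 2 - p * q) = θ * ((1 - γ) ^ 2 - (1 - p) * (1 - q)) := by
      linear_combination -rel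
    have n1 : 0 ≤ θ * ((1 - γ) ^ 2 - (1 - p) * (1 - q)) := by
      rw [← e1]; exact mul_nonneg (by linarith) (by linarith)
    have n2 := nonneg_of_mul_nonneg_right n1 hθ0
    rw [e1]
    nlinarith [mul_nonneg n2 (by nlinarith : 0 ≤ D₂ - D₃ * θ)]
  rw [← hγ]
  apply diag_bound h12 h23 hD₃ hγ0 hγ1 hθ hθ1
  linarith

/-! ### Reduction to two-point measures -/

/-- A probability vector on the two-point space `Bool`. -/
structure IsW (u : Bool → ℝ) : Prop where
  nonneg : ∀ b, 0 ≤ u b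
  sum : u true + u false = 1

/-- Expectation of a function on the cube `Bool³` under the product of the weights `u, v, w`. -/
def E3 (u v w : Bool → ℝ) (F : Bool → Bool → Bool → ℝ) : ℝ :=
  ∑ i, u i * ∑ j, v j * ∑ k, w k * F i j k

/-- Some two-point measure does at least as well as `μ` for the pair `(g, h)`. Otherwise, if `h` takes
values on both sides of its mean `H`, a line
`g = lam (h - H)` bounds the curve `(g, h)` by `g ≥ lam (h - H)`; the
mean conditions force the curve to lie on the line a.e., which produces a good pair of points. -/
lemma two_point {X : Type*} [MeasurableSpace X] {μ : Measure X} [IsProbabilityMeasure μ]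
    {g h : X → ℝ} (hg : Integrable g μ) (hh : Integrable h μ) (hg0 : ∫ x, g x ∂μ ≤ 0) :
    ∃ (u : Bool → ℝ) (x : Bool → X), IsW u ∧ ∑ b, u b * g (x b) ≤ 0 ∧
      ∫ x, h x ∂μ ≤ ∑ b, u b * h (x b) := by
  classical
  set H := ∫ x, h x ∂μ with hH
  by_contra hcon
  push Not at hcon
  have one : ∀ x, H ≤ h x → 0 < g x := by
    intro x hx
    by_contra hc
    push Not at hc
    have := hcon (fun b => if b then 1 else 0) (fun _ => x)
      ⟨fun b => by cases b <;> simp, by simp⟩ (by simpa using hc)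
    simp at this
    linarith
  have two : ∀ x y, H < h x → h y < H → 0 < g x * (H - h y) + g y * (h x - H) := by
    intro x y hx hy
    by_contra hc
    push Not at hc
    have hd : 0 < h x - h y := by linarith
    have := hcon (fun b => if b then (H - h y) / (h x - h y) else (h x - H) / (h x - h y))
      (fun b => if b then x else y)
      ⟨fun b => by cases b <;> simp <;> apply div_nonneg <;> linarith,
        by simp; field_simp; ring⟩ (by
          simp only [Fintype.sum_bool, if_true]
          have : (H - h y) / (h x - h y) * g x + (h x - H) / (h x - h y) * g y
            = (g x * (H - h y) + g y * (h x - H)) / (h x - h y) := by field_simp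
          simp only [Bool.false_eq_true, if_false]
          rw [this]
          exact div_nonpos_of_nonpos_of_nonneg hc hd.le)
    simp only [Fintype.sum_bool, if_true, Bool.false_eq_true, if_false] at this
    have e : (H - h y) / (h x - h y) * h x + (h x - H) / (h x - h y) * h y = H := by
      field_simp; ring
    linarith
  have hint : ∫ x, (h x - H) ∂μ = 0 := by
    rw [integral_sub hh (integrable_const _)]; simp [hH]
  have hhi : Integrable (fun x => h x - H) μ := hh.sub (integrable_const _)
  -- a supporting line: `g ≥ lam (h - H)` forces equality a.e.
  have line : ∀ lam : ℝ, (∀ x, lam * (h x - H) ≤ g x) → ∀ᵐ x ∂μ, g x = lam * (h x - H) := by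
    intro lam hl
    have hi : Integrable (fun x => g x - lam * (h x - H)) μ := hg.sub (hhi.const_mul lam)
    have h0 : ∫ x, (g x - lam * (h x - H)) ∂μ = 0 := by
      apply le_antisymm
      · rw [integral_sub hg (hhi.const_mul lam), integral_const_mul, hint]
        simpa using hg0
      · exact integral_nonneg fun x => sub_nonneg.2 (hl x)
    have := (integral_eq_zero_iff_of_nonneg (fun x => sub_nonneg.2 (hl x)) hi).1 h0
    filter_upwards [this] with x hx
    simpa [sub_eq_zero] using hx
  by_cases hP : ∀ x, h x ≤ H
  · -- then `h = H` a.e., where `g > 0`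
    have := (integral_eq_zero_iff_of_nonneg (μ := μ) (f := fun x => H - h x)
      (fun x => sub_nonneg.2 (hP x)) ((integrable_const _).sub hh)).1 (by
        rw [integral_sub (integrable_const _) hh]; simp [hH])
    have hpos : ∀ᵐ x ∂μ, 0 < g x := by
      filter_upwards [this] with x hx
      apply one
      have : H - h x = 0 := hx
      linarith
    have hz := (integral_eq_zero_iff_of_nonneg_ae (hpos.mono fun x hx => hx.le) hg).1
      (le_antisymm hg0 (integral_nonneg_of_ae (hpos.mono fun x hx => hx.le)))
    obtain ⟨x, hx1, hx2⟩ := (hpos.and hz).exists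
    simp at hx2
    linarith
  push Not at hP
  obtain ⟨x₀, hx₀⟩ := hP
  by_cases hN : ∀ y, H ≤ h y
  · have hpos : ∀ x, 0 < g x := fun x => one x (hN x)
    have hz := (integral_eq_zero_iff_of_nonneg (fun x => (hpos x).le) hg).1
      (le_antisymm hg0 (integral_nonneg (fun x => (hpos x).le)))
    obtain ⟨x, hx⟩ := hz.exists
    have := hpos x
    simp at hx
    linarith
  push Not at hN
  obtain ⟨y₀, hy₀⟩ := hN
  let T : Set ℝ := (fun y => -g y / (H - h y)) '' {y | h y < H}
  have hub : ∀ x, H < h x → ∀ s ∈ T, s ≤ g x / (h x - H) := by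
    rintro x hx _ ⟨y, hy, rfl⟩
    have hy' : h y < H := hy
    have := two x y hx hy'
    dsimp only
    rw [div_le_div_iff₀ (by linarith) (by linarith)]
    linarith
  have hne : T.Nonempty := ⟨_, y₀, hy₀, rfl⟩
  have hbdd : BddAbove T := ⟨_, hub x₀ hx₀⟩
  have hl : ∀ x, sSup T * (h x - H) ≤ g x := by
    intro x
    rcases lt_trichotomy (h x) H with hx | hx | hx
    · have := le_csSup hbdd ⟨x, hx, rfl⟩
      dsimp only at this
      rw [div_le_iff₀ (by linarith)] at this
      linarith
    · rw [hx]; simpa using (one x hx.ge).le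
    · have := csSup_le hne (hub x hx)
      rw [le_div_iff₀ (by linarith)] at this
      linarith
  have hae := line _ hl
  -- equality a.e. rules out points with `h = H`, and both strict sides have positive measure
  have hnP : ∃ x, H < h x ∧ g x = sSup T * (h x - H) := by
    by_contra hc
    push Not at hc
    have hle : ∀ᵐ x ∂μ, h x ≤ H := by
      filter_upwards [hae] with x hx
      by_contra h'
      push Not at h'
      exact hc x h' hx
    have := (integral_eq_zero_iff_of_nonneg_ae (μ := μ) (f := fun x => H - h x)
      (hle.mono fun x hx => sub_nonneg.2 hx) ((integrable_const _).sub hh)).1 (by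
        rw [integral_sub (integrable_const _) hh]; simp [hH])
    obtain ⟨x, hx1, hx2⟩ := (hae.and this).exists
    have hx3 : h x = H := by
      have : H - h x = 0 := hx2
      linarith
    have := one x hx3.ge
    rw [hx3] at hx1
    simp at hx1
    linarith
  have hnN : ∃ y, h y < H ∧ g y = sSup T * (h y - H) := by
    by_contra hc
    push Not at hc
    have hle : ∀ᵐ x ∂μ, H ≤ h x := by
      filter_upwards [hae] with x hx
      by_contra h'
      push Not at h'
      exact hc x h' hx
    have := (integral_eq_zero_iff_of_nonneg_ae (μ := μ) (f := fun x => h x - H)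
      (hle.mono fun x hx => sub_nonneg.2 hx) hhi).1 hint
    obtain ⟨x, hx1, hx2⟩ := (hae.and this).exists
    have hx3 : h x = H := by
      have : h x - H = 0 := hx2
      linarith
    have := one x hx3.ge
    rw [hx3] at hx1
    simp at hx1
    linarith
  -- a point on each side of `h = H`, both on the line, contradict `two`
  obtain ⟨x, hx, ex⟩ := hnP
  obtain ⟨y, hy, ey⟩ := hnN
  have := two x y hx hy
  rw [ex, ey] at this
  nlinarith

lemma integrable_of_bdd {X : Type*} [MeasurableSpace X] {μ : Measure X} [IsProbabilityMeasure μ]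
    {f : X → ℝ} (hf : Measurable f) {C : ℝ} (hC : ∀ x, |f x| ≤ C) : Integrable f μ :=
  Integrable.of_bound hf.aestronglyMeasurable C (Filter.Eventually.of_forall hC)

lemma two_point_prod {X Y : Type*} [MeasurableSpace X] [MeasurableSpace Y]
    {μ : Measure X} [IsProbabilityMeasure μ] {ν : Measure Y} [IsProbabilityMeasure ν]
    {g h : X × Y → ℝ} (hg : Measurable g) (hh : Measurable h) {C : ℝ}
    (hgC : ∀ z, |g z| ≤ C) (hhC : ∀ z, |h z| ≤ C) (hg0 : ∫ z, g z ∂μ.prod ν ≤ 0) :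
    ∃ (u : Bool → ℝ) (x : Bool → X), IsW u ∧ ∫ y, ∑ b, u b * g (x b, y) ∂ν ≤ 0 ∧
      ∫ z, h z ∂μ.prod ν ≤ ∫ y, ∑ b, u b * h (x b, y) ∂ν := by
  have ig : Integrable g (μ.prod ν) := integrable_of_bdd hg hgC
  have ih : Integrable h (μ.prod ν) := integrable_of_bdd hh hhC
  have sg : ∀ x, Integrable (fun y => g (x, y)) ν := fun x =>
    integrable_of_bdd (by fun_prop) (fun y => hgC (x, y))
  have sh : ∀ x, Integrable (fun y => h (x, y)) ν := fun x =>
    integrable_of_bdd (by fun_prop) (fun y => hhC (x, y))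
  rw [integral_prod _ ig] at hg0
  rw [integral_prod _ ih]
  obtain ⟨u, x, hu, h1, h2⟩ := two_point ig.integral_prod_left ih.integral_prod_left hg0
  refine ⟨u, x, hu, ?_, ?_⟩
  · rw [integral_finsetSum _ (fun b _ => (sg (x b)).const_mul (u b))]
    simpa only [integral_const_mul] using h1
  · rw [integral_finsetSum _ (fun b _ => (sh (x b)).const_mul (u b))]
    simpa only [integral_const_mul] using h2

lemma IsW.abs_sum_le {u : Bool → ℝ} (hu : IsW u) {c : Bool → ℝ} {C : ℝ} (hc : ∀ b, |c b| ≤ C) :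
    |∑ b, u b * c b| ≤ C := by
  have h1 := hu.nonneg true
  have h2 := hu.nonneg false
  have h3 := hu.sum
  have h4 := abs_le.1 (hc true)
  have h5 := abs_le.1 (hc false)
  rw [Fintype.sum_bool, abs_le]
  constructor <;> nlinarith

/-- Product measures can be replaced by products of two-point measures, one factor at a time. -/
lemma reduction {X₁ X₂ X₃ : Type*} [MeasurableSpace X₁] [MeasurableSpace X₂] [MeasurableSpace X₃]
    {μ₁ : Measure X₁} {μ₂ : Measure X₂} {μ₃ : Measure X₃} [IsProbabilityMeasure μ₁]
    [IsProbabilityMeasure μ₂] [IsProbabilityMeasure μ₃]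
    {g h : X₁ × X₂ × X₃ → ℝ} (hg : Measurable g) (hh : Measurable h) {C : ℝ}
    (hgC : ∀ z, |g z| ≤ C) (hhC : ∀ z, |h z| ≤ C)
    (hg0 : ∫ z, g z ∂μ₁.prod (μ₂.prod μ₃) ≤ 0) :
    ∃ (u v w : Bool → ℝ) (x : Bool → X₁) (y : Bool → X₂) (z : Bool → X₃), IsW u ∧ IsW v ∧ IsW w ∧
      E3 u v w (fun i j k => g (x i, y j, z k)) ≤ 0 ∧
      ∫ t, h t ∂μ₁.prod (μ₂.prod μ₃) ≤ E3 u v w (fun i j k => h (x i, y j, z k)) := by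
  obtain ⟨u, x, hu, h1, h2⟩ := two_point_prod hg hh hgC hhC hg0
  obtain ⟨v, y, hv, h3, h4⟩ := two_point_prod
    (g := fun t => ∑ b, u b * g (x b, t)) (h := fun t => ∑ b, u b * h (x b, t))
    (by fun_prop) (by fun_prop) (fun t => hu.abs_sum_le fun b => hgC _)
    (fun t => hu.abs_sum_le fun b => hhC _) h1
  obtain ⟨w, z, hw, h5, h6⟩ := two_point
    (integrable_of_bdd (by fun_prop) (fun t => hv.abs_sum_le fun j => hu.abs_sum_le
      fun i => hgC (x i, y j, t)))
    (integrable_of_bdd (by fun_prop) (fun t => hv.abs_sum_le fun j => hu.abs_sum_le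
      fun i => hhC (x i, y j, t))) h3
  refine ⟨u, v, w, x, y, z, hu, hv, hw, ?_, (h2.trans (h4.trans h6)).trans ?_⟩
  · refine le_trans (le_of_eq ?_) h5
    simp only [E3, Fintype.sum_bool]; ring
  · apply le_of_eq
    simp only [E3, Fintype.sum_bool]; ring

/-- The measure with mass `u b` at the point `x b` for `b : Bool`. -/
noncomputable def bern {X : Type*} [MeasurableSpace X] (u : Bool → ℝ) (x : Bool → X) : Measure X :=
  ∑ b, ENNReal.ofReal (u b) • Measure.dirac (x b)

lemma bern_prob {X : Type*} [MeasurableSpace X] {u : Bool → ℝ} (hu : IsW u) (x : Bool → X) :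
    IsProbabilityMeasure (bern u x) := by
  constructor
  simp only [bern, Fintype.sum_bool, Measure.coe_add, Measure.coe_smul, Pi.add_apply, Pi.smul_apply,
    measure_univ, smul_eq_mul, mul_one]
  rw [← ENNReal.ofReal_add (hu.nonneg _) (hu.nonneg _), hu.sum, ENNReal.ofReal_one]

lemma integral_bern {X : Type*} [MeasurableSpace X] [MeasurableSingletonClass X] {u : Bool → ℝ}
    (hu : IsW u) (x : Bool → X) (g : X → ℝ) : ∫ t, g t ∂bern u x = ∑ b, u b * g (x b) := by
  have hi : ∀ b, Integrable g (ENNReal.ofReal (u b) • Measure.dirac (x b)) := fun b =>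
    (integrable_dirac (by simp)).smul_measure (by simp)
  rw [bern, integral_finsetSum_measure fun b _ => hi b]
  refine Finset.sum_congr rfl fun b _ => ?_
  rw [integral_smul_measure, integral_dirac, ENNReal.toReal_ofReal (hu.nonneg b), smul_eq_mul]

lemma integral_bern3 {X₁ X₂ X₃ : Type*} [MeasurableSpace X₁] [MeasurableSpace X₂]
    [MeasurableSpace X₃] [MeasurableSingletonClass X₁] [MeasurableSingletonClass X₂]
    [MeasurableSingletonClass X₃] {u v w : Bool → ℝ} (hu : IsW u) (hv : IsW v) (hw : IsW w)
    (x : Bool → X₁) (y : Bool → X₂) (z : Bool → X₃) {g : X₁ × X₂ × X₃ → ℝ} (hg : Measurable g)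
    {C : ℝ} (hC : ∀ t, |g t| ≤ C) :
    ∫ t, g t ∂(bern u x).prod ((bern v y).prod (bern w z)) =
      E3 u v w (fun i j k => g (x i, y j, z k)) := by
  have := bern_prob hu x
  have := bern_prob hv y
  have := bern_prob hw z
  rw [integral_prod _ (integrable_of_bdd hg hC), integral_bern hu]
  refine Finset.sum_congr rfl fun i _ => ?_
  rw [integral_prod _ (integrable_of_bdd (by fun_prop) fun t => hC (x i, t)), integral_bern hv]
  congr 1
  refine Finset.sum_congr rfl fun j _ => ?_
  rw [integral_bern hw]

/-! ### The problem on the cube -/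

/-- If `f ≥ a - d` pointwise on the cube and `f` has nonpositive mean, then `d` has mean at least
`a`. The index order is `111, 110, 101, 100, 011, 010, 001, 000`. -/
lemma dist_bound {p q r a : ℝ} (hp : 0 ≤ p) (hp1 : p ≤ 1) (hq : 0 ≤ q) (hq1 : q ≤ 1)
    (hr : 0 ≤ r) (hr1 : r ≤ 1) {f₁ f₂ f₃ f₄ f₅ f₆ f₇ f₈ : ℝ} (d₁ d₂ d₃ d₄ d₅ d₆ d₇ d₈ : ℝ)
    (h₁ : a - d₁ ≤ f₁) (h₂ : a - d₂ ≤ f₂) (h₃ : a - d₃ ≤ f₃) (h₄ : a - d₄ ≤ f₄)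
    (h₅ : a - d₅ ≤ f₅) (h₆ : a - d₆ ≤ f₆) (h₇ : a - d₇ ≤ f₇) (h₈ : a - d₈ ≤ f₈)
    (hE : p * (q * (r * f₁ + (1 - r) * f₂) + (1 - q) * (r * f₃ + (1 - r) * f₄)) +
      (1 - p) * (q * (r * f₅ + (1 - r) * f₆) + (1 - q) * (r * f₇ + (1 - r) * f₈)) ≤ 0) :
    a ≤ p * (q * (r * d₁ + (1 - r) * d₂) + (1 - q) * (r * d₃ + (1 - r) * d₄)) +
      (1 - p) * (q * (r * d₅ + (1 - r) * d₆) + (1 - q) * (r * d₇ + (1 - r) * d₈)) := by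
  have p' := sub_nonneg.2 hp1
  have q' := sub_nonneg.2 hq1
  have r' := sub_nonneg.2 hr1
  have key : p * (q * (r * (a - d₁) + (1 - r) * (a - d₂)) +
      (1 - q) * (r * (a - d₃) + (1 - r) * (a - d₄))) +
      (1 - p) * (q * (r * (a - d₅) + (1 - r) * (a - d₆)) +
      (1 - q) * (r * (a - d₇) + (1 - r) * (a - d₈))) ≤ 0 := by
    refine le_trans ?_ hE
    gcongr
  linarith

/-- The level set `{110, 101, 011}` is dominated: by `{111}` with probabilities `(p, q, ·)` when
`x₁ = x₂ = 1` is at least as likely as `x₁ ≠ x₂`, and by the majority set with the same `p, q`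
otherwise. The third probability is chosen to give the same probability of the level set. -/
lemma triangle_bound {D₁ D₂ D₃ a : ℝ} (h12 : D₂ ≤ D₁) (h23 : D₃ ≤ D₂) (hD₃ : 0 < D₃)
    {p q t : ℝ} (hp : 0 ≤ p) (hp1 : p ≤ 1) (hq : 0 ≤ q) (hq1 : q ≤ 1) (ht : 0 ≤ t) (ht1 : t ≤ 1)
    (h : a ≤ D₃ * (p * q * t + (1 - p * q) * (1 - t)) + D₂ * ((1 - p) * (1 - q))) :
    p * q * (1 - t) + t * (p * (1 - q) + (1 - p) * q) ≤
      max (Fone D₁ D₂ D₃ a) (Ftwo D₁ D₂ D₃ a) := by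
  have p' := sub_nonneg.2 hp1
  have q' := sub_nonneg.2 hq1
  have hpq := mul_nonneg hp hq
  have hpq' := mul_nonneg p' q'
  have hpq1 := mul_nonneg hp q'
  have hpq2 := mul_nonneg p' hq
  obtain ⟨s, hs⟩ : ∃ s, s = p * q := ⟨_, rfl⟩
  obtain ⟨r, hr⟩ : ∃ r, r = p * (1 - q) + (1 - p) * q := ⟨_, rfl⟩
  have hz : (1 - p) * (1 - q) = 1 - s - r := by rw [hs, hr]; ring
  have hs0 : 0 ≤ s := hs ▸ hpq
  have hr0 : 0 ≤ r := by rw [hr]; linarith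
  rw [hz] at hpq'
  rw [← hs, hz] at h
  rw [← hs, ← hr]
  rcases le_or_gt r s with hrs | hrs
  · apply le_max_of_le_left
    rcases hs0.eq_or_lt with h0 | h0
    · have : r = 0 := by linarith
      rw [← h0, this]
      simpa using Fone_nonneg h12 h23 hD₃
    have e1 : r / s ≤ 1 := (div_le_one h0).2 hrs
    have e2 : 0 ≤ r / s := by positivity
    have e3 : s - r ≤ 1 - r / s := by
      have : (1 - r / s) * s = s - r := by field_simp
      rw [← this]
      have : 0 ≤ 1 - r / s := by linarith
      nlinarith
    have key := single_bound (a := a) h12 h23 hD₃ hp hp1 hq hq1 (r := 1 - t * (1 - r / s))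
      (by nlinarith) (by nlinarith) (by
        have hsum : (1 - p) + (1 - q) = r + 2 * (1 - s - r) := by rw [hs, hr]; ring
        have b1 : D₂ * (r + 2 * (1 - s - r)) ≤ D₁ * (1 - p) + D₂ * (1 - q) := by
          rw [← hsum]; nlinarith
        have b2 : D₃ * (1 - s) ≤ D₂ * (1 - s) := by nlinarith
        have b3 : 0 ≤ D₃ * (t * (1 - r / s - (2 * s - 1))) := by
          apply mul_nonneg hD₃.le (mul_nonneg ht _)
          linarith
        linarith)
    rw [← hs] at key
    refine le_trans (le_of_eq ?_) key
    field_simp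
    ring
  · have hrpos : 0 < r := by linarith
    have e1 : s / r ≤ 1 := (div_le_one hrpos).2 hrs.le
    have e2 : 0 ≤ s / r := by positivity
    have key := maj_bound (a := a) h12 h23 hD₃ hp hp1 hq hq1 (θ := t * (1 - s / r))
      (by apply mul_nonneg ht; linarith) (by nlinarith) (by
        rw [← hs, hz]
        have e3 : s ≤ (1 - s) * (s / r) := by
          have : r * (s / r) = s := by field_simp
          nlinarith
        have b3 : 0 ≤ D₃ * (t * ((1 - s) * (s / r) - s)) := by
          apply mul_nonneg hD₃.le (mul_nonneg ht _)
          linarith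
        linarith)
    rw [← hs, ← hr] at key
    refine le_trans (le_of_eq ?_) key
    field_simp
    ring

/-- If some vertex, here `000`, has `F < a - D₁`, its neighbours are not in the level set, so the
level set lies in `{111, 110, 101, 011}`. For each of the 16 subsets `A` of this set `F ≥ a - d`, with
`d` the weighted Hamming distance to `A`; except for the full set and `{110, 101, 011}`, the
resulting condition reduces to that of `single_bound` with modified probabilities. -/
lemma cube_bound_of_far {D₁ D₂ D₃ a : ℝ} (h12 : D₂ ≤ D₁) (h23 : D₃ ≤ D₂) (hD₃ : 0 < D₃)
    {u v w : Bool → ℝ} (hu : IsW u) (hv : IsW v) (hw : IsW w) {F : Bool → Bool → Bool → ℝ}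
    (o₁ : ∀ i i' j k, F i j k - F i' j k ≤ D₁) (o₂ : ∀ i j j' k, F i j k - F i j' k ≤ D₂)
    (o₃ : ∀ i j k k', F i j k - F i j k' ≤ D₃) (hE : E3 u v w F ≤ 0)
    (far : F false false false < a - D₁) :
    E3 u v w (fun i j k => if a ≤ F i j k then 1 else 0) ≤
      max (Fone D₁ D₂ D₃ a) (Ftwo D₁ D₂ D₃ a) := by
  obtain ⟨p, hp_def⟩ : ∃ p, p = u true := ⟨_, rfl⟩
  obtain ⟨q, hq_def⟩ : ∃ q, q = v true := ⟨_, rfl⟩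
  obtain ⟨r, hr_def⟩ : ∃ r, r = w true := ⟨_, rfl⟩
  have eu : u false = 1 - p := by linarith [hu.sum]
  have ev : v false = 1 - q := by linarith [hv.sum]
  have ew : w false = 1 - r := by linarith [hw.sum]
  have hp : 0 ≤ p := hp_def ▸ hu.nonneg true
  have hq : 0 ≤ q := hq_def ▸ hv.nonneg true
  have hr : 0 ≤ r := hr_def ▸ hw.nonneg true
  have p' : 0 ≤ 1 - p := eu ▸ hu.nonneg false
  have q' : 0 ≤ 1 - q := ev ▸ hv.nonneg false
  have r' : 0 ≤ 1 - r := ew ▸ hw.nonneg false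
  have hp1 := sub_nonneg.1 p'
  have hq1 := sub_nonneg.1 q'
  have hr1 := sub_nonneg.1 r'
  have n1 : ¬ a ≤ F false false false := by linarith
  have n2 : ¬ a ≤ F true false false := by linarith [o₁ true false false false]
  have n3 : ¬ a ≤ F false true false := by linarith [o₂ false true false false]
  have n4 : ¬ a ≤ F false false true := by linarith [o₃ false false true false]
  simp only [E3, Fintype.sum_bool, ← hp_def, ← hq_def, ← hr_def, eu, ev, ew] at hE ⊢
  simp only [n1, n2, n3, n4, if_false, mul_zero, add_zero]
  clear n1 n2 n3 n4 hp_def hq_def hr_def eu ev ew hu hv hw far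
  have e1 := o₁ true false true true
  have e2 := o₁ false true true true
  have e3 := o₂ true true false true
  have e4 := o₂ true false true true
  have e5 := o₃ true true true false
  have e6 := o₃ true true false true
  have e7 := o₁ true false true false
  have e8 := o₁ false true true false
  have e9 := o₂ true true false false
  have e10 := o₂ true false true false
  have e11 := o₃ true false true false
  have e12 := o₃ true false false true
  have e13 := o₁ true false false true
  have e14 := o₁ false true false true
  have e15 := o₂ false true false true
  have e16 := o₂ false false true true
  have e17 := o₃ false true true false
  have e18 := o₃ false true false true
  have e19 := o₁ true false false false
  have e20 := o₁ false true false false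
  have e21 := o₂ false true false false
  have e22 := o₂ false false true false
  have e23 := o₃ false false true false
  have e24 := o₃ false false false true
  clear o₁ o₂ o₃
  generalize F true true true = f₁ at *
  generalize F true true false = f₂ at *
  generalize F true false true = f₃ at *
  generalize F true false false = f₄ at *
  generalize F false true true = f₅ at *
  generalize F false true false = f₆ at *
  generalize F false false true = f₇ at *
  generalize F false false false = f₈ at *
  have db := fun d₁ d₂ d₃ d₄ d₅ d₆ d₇ d₈ h₁ h₂ h₃ h₄ h₅ h₆ h₇ h₈ =>
    dist_bound (a := a) hp hp1 hq hq1 hr hr1 (f₁ := f₁) (f₂ := f₂) (f₃ := f₃) (f₄ := f₄)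
      (f₅ := f₅) (f₆ := f₆) (f₇ := f₇) (f₈ := f₈) d₁ d₂ d₃ d₄ d₅ d₆ d₇ d₈ h₁ h₂ h₃ h₄ h₅ h₆ h₇ h₈ hE
  have sb := fun (x y z : ℝ) hx hx1 hy hy1 hz hz1 h => le_max_of_le_left (c := Ftwo D₁ D₂ D₃ a)
    (single_bound (a := a) (p := x) (q := y) (r := z) h12 h23 hD₃ hx hx1 hy hy1 hz hz1 h)
  have m12 := mul_nonneg hp hq
  have m12' := mul_nonneg p' q'
  have m13 := mul_nonneg hp hr
  have m13' := mul_nonneg p' r'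
  have m23 := mul_nonneg hq hr
  have m23' := mul_nonneg q' r'
  have x12 := mul_nonneg hp q'
  have x12' := mul_nonneg p' hq
  have x13 := mul_nonneg hp r'
  have x13' := mul_nonneg p' hr
  have x23 := mul_nonneg hq r'
  have x23' := mul_nonneg q' hr
  by_cases a1 : a ≤ f₁ <;> by_cases a2 : a ≤ f₂ <;> by_cases a3 : a ≤ f₃ <;>
    by_cases a5 : a ≤ f₅ <;> simp only [a1, a2, a3, a5, if_true, if_false]
  -- `{F ≥ a}` is all four points
  · have hd := db 0 0 0 D₃ 0 D₃ D₂ (D₂ + D₃)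
      (by linarith) (by linarith) (by linarith) (by linarith) (by linarith) (by linarith)
      (by linarith) (by linarith)
    have hm := maj_bound h12 h23 hD₃ hp hp1 hq hq1 hr hr1 (a := a)
      (by linarith)
    linarith
  -- `{F ≥ a}` is `{111, 110, 101}`
  · have hd := db 0 0 0 D₃ D₁ D₁ D₁ (D₁ + D₃)
      (by linarith) (by linarith) (by linarith) (by linarith) (by linarith) (by linarith)
      (by linarith) (by linarith)
    have hs := sb p 1 (1 - (1 - q) * (1 - r)) (by linarith) (by linarith) (by linarith)
      (by linarith) (by linarith) (by linarith) (by linarith)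
    linarith
  -- `{F ≥ a}` is `{111, 110, 011}`
  · have hd := db 0 0 D₂ D₂ 0 D₃ D₂ (D₂ + D₃)
      (by linarith) (by linarith) (by linarith) (by linarith) (by linarith) (by linarith)
      (by linarith) (by linarith)
    have hs := sb 1 q (1 - (1 - p) * (1 - r)) (by linarith) (by linarith) (by linarith)
      (by linarith) (by linarith) (by linarith) (by linarith)
    linarith
  -- `{F ≥ a}` is `{111, 110}`
  · have hd := db 0 0 D₂ D₂ D₁ D₁ (D₁ + D₂) (D₁ + D₂)
      (by linarith) (by linarith) (by linarith) (by linarith) (by linarith) (by linarith)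
      (by linarith) (by linarith)
    have hs := sb p q 1 (by linarith) (by linarith) (by linarith)
      (by linarith) (by linarith) (by linarith) (by linarith)
    linarith
  -- `{F ≥ a}` is `{111, 101, 011}`
  · have hd := db 0 D₃ 0 D₃ 0 D₃ D₂ (D₂ + D₃)
      (by linarith) (by linarith) (by linarith) (by linarith) (by linarith) (by linarith)
      (by linarith) (by linarith)
    have hs := sb 1 (1 - (1 - p) * (1 - q)) r (by linarith) (by linarith) (by linarith)
      (by linarith) (by linarith) (by linarith) (by linarith)
    linarith
  -- `{F ≥ a}` is `{111, 101}`
  · have hd := db 0 D₃ 0 D₃ D₁ (D₁ + D₃) D₁ (D₁ + D₃)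
      (by linarith) (by linarith) (by linarith) (by linarith) (by linarith) (by linarith)
      (by linarith) (by linarith)
    have hs := sb p 1 r (by linarith) (by linarith) (by linarith)
      (by linarith) (by linarith) (by linarith) (by linarith)
    linarith
  -- `{F ≥ a}` is `{111, 011}`
  · have hd := db 0 D₃ D₂ (D₂ + D₃) 0 D₃ D₂ (D₂ + D₃)
      (by linarith) (by linarith) (by linarith) (by linarith) (by linarith) (by linarith)
      (by linarith) (by linarith)
    have hs := sb 1 q r (by linarith) (by linarith) (by linarith)
      (by linarith) (by linarith) (by linarith) (by linarith)
    linarith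
  -- `{F ≥ a}` is `{111}`
  · have hd := db 0 D₃ D₂ (D₂ + D₃) D₁ (D₁ + D₃) (D₁ + D₂) (D₁ + D₂ + D₃)
      (by linarith) (by linarith) (by linarith) (by linarith) (by linarith) (by linarith)
      (by linarith) (by linarith)
    have hs := sb p q r (by linarith) (by linarith) (by linarith)
      (by linarith) (by linarith) (by linarith) (by linarith)
    linarith
  -- `{F ≥ a}` is `{110, 101, 011}`
  · have hd := db D₃ 0 0 D₃ 0 D₃ D₂ (D₂ + D₃)
      (by linarith) (by linarith) (by linarith) (by linarith) (by linarith) (by linarith)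
      (by linarith) (by linarith)
    have hm := triangle_bound h12 h23 hD₃ hp hp1 hq hq1 hr hr1 (a := a)
      (by linarith)
    linarith
  -- `{F ≥ a}` is `{110, 101}`
  · have hd := db D₃ 0 0 D₃ (D₁ + D₃) D₁ D₁ (D₁ + D₃)
      (by linarith) (by linarith) (by linarith) (by linarith) (by linarith) (by linarith)
      (by linarith) (by linarith)
    have hs := sb p 1 (q * (1 - r) + (1 - q) * r) (by linarith) (by linarith) (by linarith)
      (by linarith) (by linarith) (by linarith) (by linarith)
    linarith
  -- `{F ≥ a}` is `{110, 011}`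
  · have hd := db D₃ 0 (D₂ + D₃) D₂ 0 D₃ D₂ (D₂ + D₃)
      (by linarith) (by linarith) (by linarith) (by linarith) (by linarith) (by linarith)
      (by linarith) (by linarith)
    have hs := sb 1 q (p * (1 - r) + (1 - p) * r) (by linarith) (by linarith) (by linarith)
      (by linarith) (by linarith) (by linarith) (by linarith)
    linarith
  -- `{F ≥ a}` is `{110}`
  · have hd := db D₃ 0 (D₂ + D₃) D₂ (D₁ + D₃) D₁ (D₁ + D₂ + D₃) (D₁ + D₂)
      (by linarith) (by linarith) (by linarith) (by linarith) (by linarith) (by linarith)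
      (by linarith) (by linarith)
    have hs := sb p q (1 - r) (by linarith) (by linarith) (by linarith)
      (by linarith) (by linarith) (by linarith) (by linarith)
    linarith
  -- `{F ≥ a}` is `{101, 011}`
  · have hd := db D₂ (D₂ + D₃) 0 D₃ 0 D₃ D₂ (D₂ + D₃)
      (by linarith) (by linarith) (by linarith) (by linarith) (by linarith) (by linarith)
      (by linarith) (by linarith)
    have hs := sb 1 (p * (1 - q) + (1 - p) * q) r (by linarith) (by linarith) (by linarith)
      (by linarith) (by linarith) (by linarith) (by linarith)
    linarith
  -- `{F ≥ a}` is `{101}`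
  · have hd := db D₂ (D₂ + D₃) 0 D₃ (D₁ + D₂) (D₁ + D₂ + D₃) D₁ (D₁ + D₃)
      (by linarith) (by linarith) (by linarith) (by linarith) (by linarith) (by linarith)
      (by linarith) (by linarith)
    have hs := sb p (1 - q) r (by linarith) (by linarith) (by linarith)
      (by linarith) (by linarith) (by linarith) (by linarith)
    linarith
  -- `{F ≥ a}` is `{011}`
  · have hd := db D₁ (D₁ + D₃) (D₁ + D₂) (D₁ + D₂ + D₃) 0 D₃ D₂ (D₂ + D₃)
      (by linarith) (by linarith) (by linarith) (by linarith) (by linarith) (by linarith)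
      (by linarith) (by linarith)
    have hs := sb (1 - p) q r (by linarith) (by linarith) (by linarith)
      (by linarith) (by linarith) (by linarith) (by linarith)
    linarith
  -- `{F ≥ a}` is empty
  · have := Fone_nonneg (a := a) h12 h23 hD₃
    simpa using Or.inl this

lemma E3_flip (u v w : Bool → ℝ) (F : Bool → Bool → Bool → ℝ) (i j k : Bool) :
    E3 u v w F = E3 (fun b => u (xor b i)) (fun b => v (xor b j)) (fun b => w (xor b k))
      (fun b c d => F (xor b i) (xor c j) (xor d k)) := by
  cases i <;> cases j <;> cases k <;> simp [E3] <;> ring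

lemma IsW.flip {u : Bool → ℝ} (hu : IsW u) (i : Bool) : IsW (fun b => u (xor b i)) := by
  refine ⟨fun b => hu.nonneg _, ?_⟩
  have := hu.sum
  cases i <;> simp <;> linarith

lemma E3_mono {u v w : Bool → ℝ} (hu : IsW u) (hv : IsW v) (hw : IsW w)
    {F G : Bool → Bool → Bool → ℝ} (h : ∀ i j k, F i j k ≤ G i j k) :
    E3 u v w F ≤ E3 u v w G := by
  unfold E3
  gcongr with i _ j _ k _
  exacts [hu.nonneg _, hv.nonneg _, hw.nonneg _, h _ _ _]

/-- If `F ≥ a - D₁` everywhere, then `a ≤ D₁ (1 - P)` for the probability `P` of the level set, and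
`single_bound` with probabilities `(P, 1, 1)` applies; otherwise a reflection of the cube moves a vertex
with `F < a - D₁` to `000`. -/
lemma cube_bound {D₁ D₂ D₃ a : ℝ} (h12 : D₂ ≤ D₁) (h23 : D₃ ≤ D₂) (hD₃ : 0 < D₃)
    {u v w : Bool → ℝ} (hu : IsW u) (hv : IsW v) (hw : IsW w) {F : Bool → Bool → Bool → ℝ}
    (o₁ : ∀ i i' j k, F i j k - F i' j k ≤ D₁) (o₂ : ∀ i j j' k, F i j k - F i j' k ≤ D₂)
    (o₃ : ∀ i j k k', F i j k - F i j k' ≤ D₃) (hE : E3 u v w F ≤ 0) :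
    E3 u v w (fun i j k => if a ≤ F i j k then 1 else 0) ≤
      max (Fone D₁ D₂ D₃ a) (Ftwo D₁ D₂ D₃ a) := by
  have hD₁ : 0 < D₁ := by linarith
  by_cases hfar : ∃ i j k, F i j k < a - D₁
  · obtain ⟨i, j, k, h⟩ := hfar
    rw [E3_flip u v w _ i j k] at hE ⊢
    exact cube_bound_of_far h12 h23 hD₃ (hu.flip i) (hv.flip j) (hw.flip k)
      (F := fun b c d => F (xor b i) (xor c j) (xor d k)) (fun _ _ _ _ => o₁ _ _ _ _)
      (fun _ _ _ _ => o₂ _ _ _ _) (fun _ _ _ _ => o₃ _ _ _ _) hE (by simpa using h)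
  · push Not at hfar
    apply le_max_of_le_left
    set P := E3 u v w (fun i j k => if a ≤ F i j k then 1 else 0) with hP
    have lin : ∀ c d : ℝ, ∀ G : Bool → Bool → Bool → ℝ,
        E3 u v w (fun i j k => c + d * G i j k) = c + d * E3 u v w G := by
      intro c d G
      have hu' : u false = 1 - u true := by linarith [hu.sum]
      have hv' : v false = 1 - v true := by linarith [hv.sum]
      have hw' : w false = 1 - w true := by linarith [hw.sum]
      simp only [E3, Fintype.sum_bool, hu', hv', hw']
      ring
    have P0 : 0 ≤ P := by
      have := E3_mono hu hv hw (F := fun _ _ _ => 0 + 0 * 0)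
        (G := fun i j k => if a ≤ F i j k then 1 else 0)
        (fun i j k => by split_ifs <;> norm_num)
      rw [lin] at this
      linarith
    have P1 : P ≤ 1 := by
      have := E3_mono hu hv hw (G := fun _ _ _ => 1 + 0 * 0)
        (F := fun i j k => if a ≤ F i j k then 1 else 0)
        (fun i j k => by split_ifs <;> norm_num)
      rw [lin] at this
      linarith
    have key : (a - D₁) + D₁ * P ≤ 0 := by
      rw [hP, ← lin]
      refine (E3_mono hu hv hw fun i j k => ?_).trans hE
      split_ifs with h
      · linarith
      · linarith [hfar i j k]
    have := single_bound (a := a) h12 h23 hD₃ P0 P1 zero_le_one le_rfl zero_le_one le_rfl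
      (by linarith)
    linarith

/-! ### Attainment of the bound -/

/-- The extremal configurations on the cube: `a - d(·, A)` with `A = {111}` gives `F₁` and with
`A = {110, 101, 011, 111}` gives the values `ψ(γ)` in `F₂`. -/
lemma attained_le {D₁ D₂ D₃ a : ℝ} (h12 : D₂ ≤ D₁) (h23 : D₃ ≤ D₂) (hD₃ : 0 < D₃) {S : ℝ≥0∞}
    (hS : ∀ (u v w : Bool → ℝ) (F : Bool → Bool → Bool → ℝ), IsW u → IsW v → IsW w →
      (∀ i i' j k, |F i j k - F i' j k| ≤ D₁) → (∀ i j j' k, |F i j k - F i j' k| ≤ D₂) →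
      (∀ i j k k', |F i j k - F i j k'| ≤ D₃) → E3 u v w F ≤ 0 →
      ENNReal.ofReal (E3 u v w (fun i j k => if a ≤ F i j k then 1 else 0)) ≤ S) (ha : 0 ≤ a) :
    ENNReal.ofReal (max (Fone D₁ D₂ D₃ a) (Ftwo D₁ D₂ D₃ a)) ≤ S := by
  have hD₂ : 0 < D₂ := by linarith
  have hD₁ : 0 < D₁ := by linarith
  have hw : ∀ p : ℝ, 0 ≤ p → p ≤ 1 → IsW (fun b => if b then p else 1 - p) := by
    intro p h0 h1
    exact ⟨fun b => by cases b <;> simp <;> linarith, by simp⟩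
  -- `F = a - d(·, {111})`
  have single : ∀ p q r : ℝ, 0 ≤ p → p ≤ 1 → 0 ≤ q → q ≤ 1 → 0 ≤ r → r ≤ 1 →
      a ≤ D₁ * (1 - p) + D₂ * (1 - q) + D₃ * (1 - r) → ENNReal.ofReal (p * q * r) ≤ S := by
    intro p q r hp hp1 hq hq1 hr hr1 h
    refine le_trans (ENNReal.ofReal_le_ofReal ?_) (hS _ _ _ (fun i j k =>
      a - ((if i then 0 else D₁) + (if j then 0 else D₂) + (if k then 0 else D₃)))
      (hw p hp hp1) (hw q hq hq1) (hw r hr hr1) ?_ ?_ ?_ ?_)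
    · have n1 : ¬ D₁ + D₂ + D₃ ≤ 0 := by linarith
      have n2 : ¬ D₁ + D₂ ≤ 0 := by linarith
      have n3 : ¬ D₁ + D₃ ≤ 0 := by linarith
      have n4 : ¬ D₂ + D₃ ≤ 0 := by linarith
      simp [E3, n1, n2, n3, n4, hD₁.not_ge, hD₂.not_ge, hD₃.not_ge, mul_assoc]
    · intro i i' j k
      cases i <;> cases i' <;> simp [abs_of_pos, hD₁, hD₁.le]
    · intro i j j' k
      cases j <;> cases j' <;> simp [abs_of_pos, hD₂, hD₂.le]
    · intro i j k k'
      cases k <;> cases k' <;> simp [abs_of_pos, hD₃, hD₃.le]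
    · simp only [E3, Fintype.sum_bool, if_true, Bool.false_eq_true, if_false]
      linarith
  -- `F = a - d(·, {110, 101, 011, 111})`
  have maj : ∀ p q r : ℝ, 0 ≤ p → p ≤ 1 → 0 ≤ q → q ≤ 1 → 0 ≤ r → r ≤ 1 →
      a ≤ D₃ * (1 - r) * (1 - p * q) + D₂ * ((1 - p) * (1 - q)) →
      ENNReal.ofReal (p * q + r * (p * (1 - q) + (1 - p) * q)) ≤ S := by
    intro p q r hp hp1 hq hq1 hr hr1 h
    refine le_trans (ENNReal.ofReal_le_ofReal ?_) (hS _ _ _ (fun i j k =>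
      a - ((if i && j then 0 else if k then 0 else D₃) + (if i || j then 0 else D₂)))
      (hw p hp hp1) (hw q hq hq1) (hw r hr hr1) ?_ ?_ ?_ ?_)
    · have n4 : ¬ D₃ + D₂ ≤ 0 := by linarith
      apply le_of_eq
      simp [E3, n4, hD₂.not_ge, hD₃.not_ge]
      ring
    · intro i i' j k
      rw [abs_le]
      cases i <;> cases i' <;> cases j <;> cases k <;> simp <;> (try constructor) <;> linarith
    · intro i j j' k
      rw [abs_le]
      cases i <;> cases j <;> cases j' <;> cases k <;> simp <;> (try constructor) <;> linarith
    · intro i j k k'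
      rw [abs_le]
      cases i <;> cases j <;> cases k <;> cases k' <;> simp <;> (try constructor) <;> linarith
    · simp [E3]
      linarith
  rcases le_total (Ftwo D₁ D₂ D₃ a) (Fone D₁ D₂ D₃ a) with hle | hle
  · rw [max_eq_left hle]
    unfold Fone
    split_ifs with c1 c2 c3
    · simp
    · push Not at c1
      have nn : 0 ≤ D₁ + D₂ + D₃ - a := by linarith
      have := single ((D₁ + D₂ + D₃ - a) / (3 * D₁)) ((D₁ + D₂ + D₃ - a) / (3 * D₂))
        ((D₁ + D₂ + D₃ - a) / (3 * D₃)) (by positivity)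
        (by rw [div_le_one (by positivity)]; linarith) (by positivity)
        (by rw [div_le_one (by positivity)]; linarith) (by positivity)
        (by rw [div_le_one (by positivity)]; linarith) (by apply le_of_eq; field_simp; ring)
      refine le_trans (le_of_eq ?_) this
      congr 1
      field_simp
      norm_num
    · push Not at c1 c2
      have nn : 0 ≤ D₁ + D₂ - a := by linarith
      have := single ((D₁ + D₂ - a) / (2 * D₁)) ((D₁ + D₂ - a) / (2 * D₂)) 1 (by positivity)
        (by rw [div_le_one (by positivity)]; linarith) (by positivity)
        (by rw [div_le_one (by positivity)]; linarith) zero_le_one le_rfl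
        (by apply le_of_eq; field_simp; ring)
      refine le_trans (le_of_eq ?_) this
      congr 1
      field_simp
      norm_num
    · push Not at c1 c2 c3
      have := single (1 - a / D₁) 1 1 (by rw [sub_nonneg, div_le_one hD₁]; linarith)
        (by rw [sub_le_self_iff]; positivity) zero_le_one le_rfl zero_le_one le_rfl
        (by apply le_of_eq; field_simp; ring)
      simpa using this
  · rw [max_eq_right hle]
    rcases eq_or_ne S ⊤ with rfl | hT
    · exact le_top
    rw [ENNReal.ofReal_le_iff_le_toReal hT]
    refine Real.sSup_le ?_ ENNReal.toReal_nonneg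
    rintro _ ⟨γ, ⟨⟨h0, h1⟩, -, ht0, ht1⟩, rfl⟩
    change psi D₂ D₃ a γ ≤ S.toReal
    change 0 < theta D₂ D₃ a γ at ht0
    change theta D₂ D₃ a γ < 1 at ht1
    rw [psi_eq hD₃ h0 h1, ← ENNReal.ofReal_le_iff_le_toReal hT]
    have hsp := theta_spec (D₂ := D₂) (a := a) hD₃ h0 h1
    refine le_trans (le_of_eq ?_)
      (maj γ γ (theta D₂ D₃ a γ) h0.le h1.le h0.le h1.le ht0.le ht1.le (by linarith))
    congr 1
    ring

lemma measurable_level {X : Type*} [MeasurableSpace X] {f : X → ℝ} (hf : Measurable f) (a : ℝ) :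
    Measurable (fun t => if a ≤ f t then (1 : ℝ) else 0) :=
  Measurable.ite (measurableSet_le measurable_const hf) measurable_const measurable_const

lemma measure_level {X : Type*} [MeasurableSpace X] {μ : Measure X} [IsProbabilityMeasure μ]
    {f : X → ℝ} (hf : Measurable f) (a : ℝ) :
    μ {x | a ≤ f x} = ENNReal.ofReal (∫ t, (if a ≤ f t then (1 : ℝ) else 0) ∂μ) := by
  have hm : MeasurableSet {x | a ≤ f x} := measurableSet_le measurable_const hf
  have : (fun t => if a ≤ f t then (1 : ℝ) else 0) = Set.indicator {x | a ≤ f x} 1 := by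
    ext t; simp [Set.indicator]
  rw [this, integral_indicator_one hm, ofReal_measureReal]

/-- **Optimal McDiarmid inequality in dimension `m = 3`.** For Polish spaces
`X₁, X₂, X₃` with at least two points each, `D₁ ≥ D₂ ≥ D₃ > 0` and `a ≥ 0`, the
supremum of `μ {f ≥ a}` over measurable `f : X₁ × X₂ × X₃ → ℝ` with componentwise
oscillations `Osc_i(f) ≤ D_i` and product probability measures `μ` with
`E_μ[f] ≤ 0` equals `max (F₁, F₂)`. -/
theorem stmt10 {X₁ X₂ X₃ : Type*}
    [TopologicalSpace X₁] [PolishSpace X₁] [MeasurableSpace X₁] [BorelSpace X₁]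
    [Nontrivial X₁]
    [TopologicalSpace X₂] [PolishSpace X₂] [MeasurableSpace X₂] [BorelSpace X₂]
    [Nontrivial X₂]
    [TopologicalSpace X₃] [PolishSpace X₃] [MeasurableSpace X₃] [BorelSpace X₃]
    [Nontrivial X₃]
    (D₁ D₂ D₃ a : ℝ) (h12 : D₂ ≤ D₁) (h23 : D₃ ≤ D₂) (hD₃ : 0 < D₃) (ha : 0 ≤ a) :
    sSup {v : ℝ≥0∞ | ∃ (f : X₁ × X₂ × X₃ → ℝ)
        (μ₁ : Measure X₁) (μ₂ : Measure X₂) (μ₃ : Measure X₃),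
        Measurable f ∧
        (∀ (x₁ x₁' : X₁) (x₂ : X₂) (x₃ : X₃),
          |f (x₁, x₂, x₃) - f (x₁', x₂, x₃)| ≤ D₁) ∧
        (∀ (x₁ : X₁) (x₂ x₂' : X₂) (x₃ : X₃),
          |f (x₁, x₂, x₃) - f (x₁, x₂', x₃)| ≤ D₂) ∧
        (∀ (x₁ : X₁) (x₂ : X₂) (x₃ x₃' : X₃),
          |f (x₁, x₂, x₃) - f (x₁, x₂, x₃')| ≤ D₃) ∧
        IsProbabilityMeasure μ₁ ∧ IsProbabilityMeasure μ₂ ∧ IsProbabilityMeasure μ₃ ∧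
        Integrable f (μ₁.prod (μ₂.prod μ₃)) ∧
        (∫ x, f x ∂μ₁.prod (μ₂.prod μ₃)) ≤ 0 ∧
        v = (μ₁.prod (μ₂.prod μ₃)) {x | a ≤ f x}} =
      ENNReal.ofReal (max (Fone D₁ D₂ D₃ a) (Ftwo D₁ D₂ D₃ a)) := by
  have level_abs : ∀ (a y : ℝ), |if a ≤ y then (1 : ℝ) else 0| ≤ 1 := by
    intro a y; split_ifs <;> simp
  apply le_antisymm
  · apply sSup_le
    rintro v ⟨f, μ₁, μ₂, μ₃, hf, o₁, o₂, o₃, hμ₁, hμ₂, hμ₃, -, hE, rfl⟩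
    rw [measure_level hf]
    apply ENNReal.ofReal_le_ofReal
    -- the oscillation bounds make `f` bounded
    obtain ⟨⟨z₁, z₂, z₃⟩⟩ : Nonempty (X₁ × X₂ × X₃) := inferInstance
    have hfC : ∀ t, |f t| ≤ max 1 (|f (z₁, z₂, z₃)| + D₁ + D₂ + D₃) := by
      rintro ⟨t₁, t₂, t₃⟩
      apply le_max_of_le_right
      have b1 := abs_le.1 (o₁ t₁ z₁ t₂ t₃)
      have b2 := abs_le.1 (o₂ z₁ t₂ z₂ t₃)
      have b3 := abs_le.1 (o₃ z₁ z₂ t₃ z₃)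
      have b4 := neg_abs_le (f (z₁, z₂, z₃))
      have b5 := le_abs_self (f (z₁, z₂, z₃))
      rw [abs_le]
      constructor <;> linarith
    obtain ⟨u, v, w, x, y, z, hu, hv, hw, h1, h2⟩ := reduction hf (measurable_level hf a) hfC
      (fun t => (level_abs _ _).trans (le_max_left _ _)) hE
    refine h2.trans (cube_bound h12 h23 hD₃ hu hv hw (F := fun i j k => f (x i, y j, z k))
      ?_ ?_ ?_ h1)
    · exact fun i i' j k => (le_abs_self _).trans (o₁ _ _ _ _)
    · exact fun i j j' k => (le_abs_self _).trans (o₂ _ _ _ _)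
    · exact fun i j k k' => (le_abs_self _).trans (o₃ _ _ _ _)
  · apply attained_le h12 h23 hD₃ _ ha
    intro u v w F hu hv hw o₁ o₂ o₃ hE
    apply le_sSup
    obtain ⟨s₁, y₁, n₁⟩ := exists_pair_ne X₁
    obtain ⟨s₂, y₂, n₂⟩ := exists_pair_ne X₂
    obtain ⟨s₃, y₃, n₃⟩ := exists_pair_ne X₃
    classical
    let f : X₁ × X₂ × X₃ → ℝ := fun t => F (decide (t.1 = s₁)) (decide (t.2.1 = s₂))
      (decide (t.2.2 = s₃))
    have hf : Measurable f := by
      have m1 : Measurable (fun t : X₁ × X₂ × X₃ => decide (t.1 = s₁)) := by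
        apply measurable_to_bool
        simpa [Set.preimage, Set.ofPred_eq_eq_singleton] using
          measurable_fst (measurableSet_singleton s₁)
      have m2 : Measurable (fun t : X₁ × X₂ × X₃ => decide (t.2.1 = s₂)) := by
        apply measurable_to_bool
        simpa [Set.preimage, Set.ofPred_eq_eq_singleton] using
          (measurable_fst.comp measurable_snd) (measurableSet_singleton s₂)
      have m3 : Measurable (fun t : X₁ × X₂ × X₃ => decide (t.2.2 = s₃)) := by
        apply measurable_to_bool
        simpa [Set.preimage, Set.ofPred_eq_eq_singleton] using
          (measurable_snd.comp measurable_snd) (measurableSet_singleton s₃)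
      exact (Measurable.of_discrete (f := fun b : Bool × Bool × Bool => F b.1 b.2.1 b.2.2)).comp
        (m1.prodMk (m2.prodMk m3))
    obtain ⟨C, hC⟩ : ∃ C, ∀ t, |f t| ≤ C := by
      refine ⟨∑ i, ∑ j, ∑ k, |F i j k|, fun t => ?_⟩
      refine le_trans ?_ (Finset.single_le_sum (f := fun i => ∑ j, ∑ k, |F i j k|)
        (fun i _ => by positivity) (Finset.mem_univ (decide (t.1 = s₁))))
      refine le_trans ?_ (Finset.single_le_sum (f := fun j => ∑ k, |F (decide (t.1 = s₁)) j k|)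
        (fun i _ => by positivity) (Finset.mem_univ (decide (t.2.1 = s₂))))
      exact Finset.single_le_sum (f := fun k => |F (decide (t.1 = s₁)) (decide (t.2.1 = s₂)) k|)
        (fun i _ => by positivity) (Finset.mem_univ (decide (t.2.2 = s₃)))
    have hfF : ∀ i j k, f ((if i then s₁ else y₁), (if j then s₂ else y₂), (if k then s₃ else y₃))
        = F i j k := by
      intro i j k
      cases i <;> cases j <;> cases k <;> simp [f, n₁.symm, n₂.symm, n₃.symm]
    have P₁ := bern_prob hu (fun i => if i then s₁ else y₁)
    have P₂ := bern_prob hv (fun j => if j then s₂ else y₂)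
    have P₃ := bern_prob hw (fun k => if k then s₃ else y₃)
    refine ⟨f, bern u (fun i => if i then s₁ else y₁), bern v (fun j => if j then s₂ else y₂),
      bern w (fun k => if k then s₃ else y₃), hf, fun _ _ _ _ => o₁ _ _ _ _,
      fun _ _ _ _ => o₂ _ _ _ _, fun _ _ _ _ => o₃ _ _ _ _, P₁, P₂, P₃, integrable_of_bdd hf hC,
      ?_, ?_⟩
    · rw [integral_bern3 hu hv hw _ _ _ hf hC]
      simpa only [hfF] using hE
    · rw [measure_level hf, integral_bern3 hu hv hw _ _ _ (measurable_level hf a)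
        (fun t => level_abs _ _)]
      simp only [hfF]
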